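/- Fix real α, β > −1, j ∈ ℕ with j ≥ 1, γ ∈ ℝ, M > 0, and a sequence M_n ≥ 0 with lim_{n→∞} M_n n^γ = M. If γ < 2(α+2j+1), then there exists N such that for all n ≥ N the largest real zero y_{n,1} of Q_n satisfies y_{n,1} > 1. -/

import Mathlib

open Polynomial Filter

/-- The Jacobi polynomial `P_n^{(α,β)}` as a real polynomial. -/
noncomputable def jacobiP (α β : ℝ) (n : ℕ) : Polynomial ℝ :=
  ∑ k ∈ Finset.range (n + 1),
    Polynomial.C (Real.Gamma (n + α + 1) / (Real.Gamma ((n : ℝ) - k + 1) * Real.Gamma (α + k + 1)) *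
        (Real.Gamma (n + β + 1) / (Real.Gamma ((k : ℝ) + 1) * Real.Gamma ((n : ℝ) - k + β + 1)))) *
      (Polynomial.C (2⁻¹ : ℝ) * (Polynomial.X - 1)) ^ k *
      (Polynomial.C (2⁻¹ : ℝ) * (Polynomial.X + 1)) ^ (n - k)

/-- The squared Jacobi norm `‖P_n^{(α,β)}‖²`. -/
noncomputable def jacobiNormSq (α β : ℝ) (n : ℕ) : ℝ :=
  ∫ x in (-1 : ℝ)..1, (jacobiP α β n).eval x ^ 2 * (1 - x) ^ α * (1 + x) ^ β

/-- The kernel `K_n^{(j,k)}(x,y)`. -/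
noncomputable def kernK (α β : ℝ) (j k n : ℕ) (x y : ℝ) : ℝ :=
  ∑ i ∈ Finset.range (n + 1),
    (Polynomial.derivative^[j] (jacobiP α β i)).eval x *
      (Polynomial.derivative^[k] (jacobiP α β i)).eval y / jacobiNormSq α β i

/-- The kernel `K_n^{(j,0)}(1,·)` as a polynomial. -/
noncomputable def kernKPoly (α β : ℝ) (j n : ℕ) : Polynomial ℝ :=
  ∑ i ∈ Finset.range (n + 1),
    Polynomial.C ((Polynomial.derivative^[j] (jacobiP α β i)).eval 1 / jacobiNormSq α β i) *
      jacobiP α β i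

/-- The varying Sobolev inner product `(f,g)_{S,n}` with mass `m`. -/
noncomputable def sobInner (α β : ℝ) (j : ℕ) (m : ℝ) (f g : Polynomial ℝ) : ℝ :=
  (∫ x in (-1 : ℝ)..1, f.eval x * g.eval x * (1 - x) ^ α * (1 + x) ^ β) +
    m * (Polynomial.derivative^[j] f).eval 1 * (Polynomial.derivative^[j] g).eval 1

/-- The Jacobi–Sobolev orthogonal polynomial `Q_n`. -/
noncomputable def sobQ (α β : ℝ) (j : ℕ) (Ms : ℕ → ℝ) (n : ℕ) : Polynomial ℝ :=
  jacobiP α β n -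
    Polynomial.C (Ms n * (Polynomial.derivative^[j] (jacobiP α β n)).eval 1 /
        (1 + Ms n * kernK α β j j (n - 1) 1 1)) *
      kernKPoly α β j (n - 1)

/-! The leading coefficient of `Q_n` is positive, so `Q_n(1) < 0` forces a zero beyond `1`. With
`r_i = P_i^{(j)}(1) / P_i(1)`, the value `Q_n(1)` has the sign of
`1 - M_n ∑_{i<n} P_i(1)² r_i (r_n - r_i) / ‖P_i‖²`. Since `r_n ≥ 2 r_i` whenever `n ≥ 2 i`, each
term with `n/4 < i ≤ n/2` is at least `P_i^{(j)}(1)² / ‖P_i‖²`, which is of order `n^{2α+4j+1}`. The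
remaining terms are nonnegative, so the sum is at least of order `n^{2(α+2j+1)}`, which beats
`1 / M_n`, of order `n^γ`. -/

open Asymptotics

section Pochhammer

theorem descPochhammer_eval_add {R : Type*} [CommRing R] (m : ℕ) (x y : R) :
    (descPochhammer R m).eval (x + y) = ∑ k ∈ Finset.range (m + 1),
      (m.choose k : R) * ((descPochhammer R k).eval x * (descPochhammer R (m - k)).eval y) := by
  have smeval_eq (k : ℕ) (z : R) :
      (descPochhammer ℤ k).smeval z = (descPochhammer R k).eval z := by
    rw [← descPochhammer_map (algebraMap ℤ R), eval_map_algebraMap, aeval_eq_smeval]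
  have h := Ring.descPochhammer_smeval_add m (Commute.all x y)
  rw [Finset.Nat.sum_antidiagonal_eq_sum_range_succ_mk] at h
  simpa only [smeval_eq, nsmul_eq_mul] using h

theorem Gamma_add_one_eq_descPochhammer_mul (k : ℕ) {x : ℝ} (hx : 0 < x - k + 1) :
    Real.Gamma (x + 1) = (descPochhammer ℝ k).eval x * Real.Gamma (x - k + 1) := by
  induction k with
  | zero => simp
  | succ k ih =>
    push_cast at hx ⊢
    have h := Real.Gamma_add_one hx.ne'
    rw [show x - (k + 1 : ℝ) + 1 + 1 = x - k + 1 by ring] at h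
    rw [ih (by linarith), h, descPochhammer_succ_eval]
    ring

theorem sum_neg_one_pow_mul_choose_mul_eval {R : Type*} [CommRing R] {P : R[X]} {n : ℕ}
    (hP : P.natDegree ≤ n) :
    ∑ k ∈ Finset.range (n + 1), (-1) ^ k * (n.choose k : R) * P.eval (k : R) =
      (-1) ^ n * (n.factorial : R) * P.coeff n := by
  have hΔ : (fwdDiff (1 : R))^[n] P.eval 0 = n.factorial * P.coeff n := by
    rcases hP.lt_or_eq with hlt | rfl
    · simp [fwdDiff_iter_eq_zero_of_degree_lt hlt, coeff_eq_zero_of_natDegree_lt hlt]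
    · simp [fwdDiff_iter_degree_eq_factorial, mul_comm]
  rw [mul_assoc, ← hΔ, fwdDiff_iter_eq_sum_shift, Finset.mul_sum]
  refine Finset.sum_congr rfl fun k hk => ?_
  obtain ⟨d, rfl⟩ := Nat.exists_eq_add_of_le (Finset.mem_range_succ_iff.mp hk)
  have hsign : (-1 : R) ^ (k + d) * (-1) ^ d = (-1) ^ k := by
    rw [pow_add, mul_assoc, ← mul_pow]; simp
  rw [← hsign]
  simp [mul_assoc]

theorem sum_neg_one_pow_mul_choose_mul_descPochhammer {R : Type*} [CommRing R]
    [NoZeroDivisors R] [Nontrivial R] {n m : ℕ} (hm : m ≤ n) (c : R) :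
    ∑ k ∈ Finset.range (n + 1), (-1) ^ k * (n.choose k : R) * (descPochhammer R m).eval (k + c) =
      if m = n then (-1) ^ n * (n.factorial : R) else 0 := by
  have hmonic := (monic_descPochhammer R m).comp_X_add_C c
  have hdeg : ((descPochhammer R m).comp (X + C c)).natDegree = m := by simp [natDegree_comp]
  have h := sum_neg_one_pow_mul_choose_mul_eval (hdeg.trans_le hm)
  simp only [eval_comp, eval_add, eval_X, eval_C] at h
  rw [h]
  split_ifs with hmn
  · rw [Monic, leadingCoeff, hdeg] at hmonic
    rw [← hmn, hmonic, mul_one]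
  · rw [coeff_eq_zero_of_natDegree_lt (by omega), mul_zero]

theorem mul_descFactorial_le_descFactorial {c i n j : ℕ} (hj : 1 ≤ j) (hc : 1 ≤ c)
    (h : c * i ≤ n) : c * i.descFactorial j ≤ n.descFactorial j := by
  obtain ⟨k, rfl⟩ := Nat.exists_eq_add_of_le' hj
  rw [Nat.descFactorial_succ, Nat.descFactorial_succ, ← mul_assoc]
  have hk : k ≤ c * k := Nat.le_mul_of_pos_left k hc
  have hi : i ≤ n := (Nat.le_mul_of_pos_left i hc).trans h
  exact Nat.mul_le_mul (by rw [Nat.mul_sub]; omega) (Nat.descFactorial_le _ hi)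

end Pochhammer

section Asymptotics

theorem isEquivalent_eval_natCast_add_of_monic {P : ℝ[X]} (hP : P.Monic) (c : ℝ) :
    (fun n : ℕ => P.eval (n + c)) ~[atTop] fun n => (n : ℝ) ^ P.natDegree := by
  have h := (P.comp (X + C c)).isEquivalent_atTop_lead.comp_tendsto
    (tendsto_natCast_atTop_atTop (R := ℝ))
  simpa [Function.comp_def, natDegree_comp, (hP.comp_X_add_C c).leadingCoeff] using h

theorem isEquivalent_natCast_add_const (c : ℝ) :
    (fun n : ℕ => n + c) ~[atTop] fun n => (n : ℝ) := by
  simpa using isEquivalent_eval_natCast_add_of_monic monic_X c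

theorem isEquivalent_descPochhammer_eval_natCast_add (j : ℕ) (c : ℝ) :
    (fun n : ℕ => (descPochhammer ℝ j).eval (n + c)) ~[atTop] fun n => (n : ℝ) ^ j := by
  simpa using isEquivalent_eval_natCast_add_of_monic (monic_descPochhammer ℝ j) c

theorem isEquivalent_Gamma_natCast_add_of_pos {b : ℝ} (hb : 0 < b) :
    (fun n : ℕ => Real.Gamma (n + b + 1)) ~[atTop] fun n => n.factorial * (n : ℝ) ^ b := by
  have hΓ := Real.Gamma_pos_of_pos hb
  have h : Real.GammaSeq b ~[atTop] fun _ => Real.Gamma b :=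
    (isEquivalent_const_iff_tendsto hΓ.ne').2 (Real.GammaSeq_tendsto_Gamma b)
  have hprod (n : ℕ) :
      Real.Gamma (n + b + 1) = (∏ i ∈ Finset.range (n + 1), (b + i)) * Real.Gamma b := by
    rw [Gamma_add_one_eq_descPochhammer_mul (n + 1) (by push_cast; linarith),
      descPochhammer_eval_eq_prod_range, ← Finset.prod_range_reflect]
    congr 1
    · refine Finset.prod_congr rfl fun i hi => ?_
      rw [Nat.add_sub_cancel, Nat.cast_sub (Finset.mem_range_succ_iff.mp hi)]
      ring
    · congr 1
      push_cast
      ring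
  refine (((IsEquivalent.refl (u := fun n : ℕ => n.factorial * (n : ℝ) ^ b * Real.Gamma b)).div
    h).congr_left ?_).congr_right ?_
  · filter_upwards [eventually_ne_atTop 0] with n hn
    have hprod_ne : ∏ i ∈ Finset.range (n + 1), (b + i) ≠ 0 := by positivity
    rw [Pi.div_apply, Real.GammaSeq, hprod]
    field_simp
  · exact .of_forall fun n => mul_div_cancel_right₀ _ hΓ.ne'

theorem isEquivalent_Gamma_natCast_add (b : ℝ) :
    (fun n : ℕ => Real.Gamma (n + b + 1)) ~[atTop] fun n => n.factorial * (n : ℝ) ^ b := by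
  obtain ⟨k, hk⟩ := exists_nat_gt (-b)
  induction k generalizing b with
  | zero => exact isEquivalent_Gamma_natCast_add_of_pos (by simpa using hk)
  | succ k ih =>
    have hb : -(b + 1) < k := by push_cast at hk; linarith
    have h := (ih (b + 1) hb).div (isEquivalent_natCast_add_const (b + 1))
    refine (h.congr_left ?_).congr_right ?_
    · filter_upwards [tendsto_natCast_atTop_atTop.eventually_gt_atTop (-(b + 1))] with n hn
      have hn' : (n : ℝ) + (b + 1) ≠ 0 := by linarith
      rw [Pi.div_apply, Real.Gamma_add_one hn', ← add_assoc]
      rw [← add_assoc] at hn'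
      field_simp
    · filter_upwards [eventually_ne_atTop 0] with n hn
      rw [Pi.div_apply, Real.rpow_add_one (by positivity)]
      field_simp

theorem exists_mul_rpow_le_sum_range {f : ℕ → ℕ → ℝ} {c p : ℝ} (hc : 0 < c) (hp : 0 ≤ p)
    (hf : ∀ n, ∀ i < n, 0 ≤ f n i)
    (hlow : ∀ᶠ i : ℕ in atTop, ∀ n, 2 * i ≤ n → c * (i : ℝ) ^ p ≤ f n i) :
    ∃ C > 0, ∀ᶠ n : ℕ in atTop, C * (n : ℝ) ^ (p + 1) ≤ ∑ i ∈ Finset.range n, f n i := by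
  obtain ⟨N, hN⟩ := eventually_atTop.1 hlow
  refine ⟨8⁻¹ * (c * (1 / 4) ^ p), by positivity, ?_⟩
  filter_upwards [eventually_ge_atTop (4 * N + 8)] with n hn
  have hn0 : (0 : ℝ) < n := mod_cast (show 0 < n by omega)
  set block := Finset.Ioc (n / 4) (n / 2)
  have hsub : block ⊆ Finset.range n := by
    intro i hi
    rw [Finset.mem_Ioc] at hi
    exact Finset.mem_range.2 (by omega)
  have hcard : 8⁻¹ * (n : ℝ) ≤ block.card := by
    rw [Nat.card_Ioc, inv_mul_le_iff₀ (by norm_num)]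
    exact_mod_cast (show n ≤ 8 * (n / 2 - n / 4) by omega)
  have hterm : ∀ i ∈ block, c * ((1 / 4) * n : ℝ) ^ p ≤ f n i := by
    intro i hi
    rw [Finset.mem_Ioc] at hi
    have hni : (n : ℝ) ≤ 4 * i := mod_cast (show n ≤ 4 * i by omega)
    refine le_trans ?_ (hN i (by omega) n (by omega))
    gcongr
    linarith
  calc
    8⁻¹ * (c * (1 / 4) ^ p) * (n : ℝ) ^ (p + 1) = 8⁻¹ * n * (c * ((1 / 4) * n) ^ p) := by
      rw [Real.rpow_add_one hn0.ne', Real.mul_rpow (by norm_num) hn0.le]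
      ring
    _ ≤ block.card * (c * ((1 / 4) * n) ^ p) := by gcongr
    _ ≤ ∑ i ∈ block, f n i := by
      rw [← nsmul_eq_mul]
      exact Finset.card_nsmul_le_sum _ _ _ hterm
    _ ≤ ∑ i ∈ Finset.range n, f n i :=
      Finset.sum_le_sum_of_subset_of_nonneg hsub fun i hi _ => hf n i (Finset.mem_range.1 hi)

theorem tendsto_mul_natCast_rpow_atTop {u : ℕ → ℝ} {γ δ M : ℝ} (hM : 0 < M)
    (hu : Tendsto (fun n : ℕ => u n * (n : ℝ) ^ γ) atTop (nhds M)) (hγ : γ < δ) :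
    Tendsto (fun n : ℕ => u n * (n : ℝ) ^ δ) atTop atTop := by
  have hpow : Tendsto (fun n : ℕ => (n : ℝ) ^ (δ - γ)) atTop atTop :=
    (tendsto_rpow_atTop (sub_pos.2 hγ)).comp tendsto_natCast_atTop_atTop
  refine (hu.pos_mul_atTop hM hpow).congr' ?_
  filter_upwards [eventually_gt_atTop 0] with n hn
  rw [mul_assoc, ← Real.rpow_add (Nat.cast_pos.2 hn), add_sub_cancel]

end Asymptotics

theorem exists_isGreatest_root_gt {P : ℝ[X]} {a : ℝ} (ha : P.eval a < 0)
    (hP : 0 < P.leadingCoeff) : ∃ y, IsGreatest {x | P.eval x = 0} y ∧ a < y := by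
  have hdeg : 0 < P.degree := by
    by_contra! hdeg
    rw [eq_C_of_degree_le_zero hdeg] at ha hP
    rw [eval_C] at ha
    rw [leadingCoeff_C] at hP
    exact ha.not_gt hP
  have htop := P.tendsto_atTop_of_leadingCoeff_nonneg hdeg hP.le
  obtain ⟨b, hb, hab⟩ := ((htop.eventually_gt_atTop 0).and (eventually_gt_atTop a)).exists
  obtain ⟨x, hx, hx0⟩ := intermediate_value_Ioo hab.le P.continuous.continuousOn ⟨ha, hb⟩
  have hfin : {x | P.eval x = 0}.Finite :=
    finite_setOfPred_isRoot (leadingCoeff_ne_zero.1 hP.ne')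
  obtain ⟨y, hy, hmax⟩ := Set.exists_max_image _ id hfin ⟨x, hx0⟩
  exact ⟨y, ⟨hy, hmax⟩, hx.1.trans_le (hmax x hx0)⟩

section BetaIntegral

theorem integral_rpow_mul_one_sub_rpow {a b : ℝ} (ha : -1 < a) (hb : -1 < b) :
    ∫ x in (0 : ℝ)..1, x ^ a * (1 - x) ^ b =
      Real.Gamma (a + 1) * Real.Gamma (b + 1) / Real.Gamma (a + b + 2) := by
  have h := ProbabilityTheory.beta_eq_betaIntegralReal (a + 1) (b + 1) (by linarith) (by linarith)
  rw [ProbabilityTheory.beta, show a + 1 + (b + 1) = a + b + 2 by ring] at h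
  have hcast : ∀ x ∈ Set.uIcc (0 : ℝ) 1,
      (x : ℂ) ^ (((a + 1 : ℝ) : ℂ) - 1) * (1 - (x : ℂ)) ^ (((b + 1 : ℝ) : ℂ) - 1) =
        ((x ^ a * (1 - x) ^ b : ℝ) : ℂ) := by
    intro x hx
    rw [Set.uIcc_of_le zero_le_one] at hx
    rw [Complex.ofReal_mul, Complex.ofReal_cpow hx.1, Complex.ofReal_cpow (sub_nonneg.2 hx.2)]
    push_cast
    simp
  rw [h, Complex.betaIntegral, intervalIntegral.integral_congr hcast,
    intervalIntegral.integral_ofReal, Complex.ofReal_re]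

theorem integral_one_sub_rpow_mul_one_add_rpow {a b : ℝ} (ha : -1 < a) (hb : -1 < b) :
    ∫ x in (-1 : ℝ)..1, (1 - x) ^ a * (1 + x) ^ b =
      2 ^ (a + b + 1) * (Real.Gamma (a + 1) * Real.Gamma (b + 1) / Real.Gamma (a + b + 2)) := by
  have hscale : ∀ x ∈ Set.uIcc (-1 : ℝ) 1, (1 - x) ^ a * (1 + x) ^ b =
      2 ^ (a + b) * ((1 / 2 * x + 1 / 2) ^ b * (1 - (1 / 2 * x + 1 / 2)) ^ a) := by
    intro x hx
    rw [Set.uIcc_of_le (by norm_num)] at hx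
    rw [show 1 - (1 / 2 * x + 1 / 2) = (1 - x) / 2 by ring,
      show 1 / 2 * x + 1 / 2 = (1 + x) / 2 by ring, Real.div_rpow (by linarith [hx.1]) two_pos.le,
      Real.div_rpow (by linarith [hx.2]) two_pos.le, Real.rpow_add two_pos]
    field_simp
  rw [intervalIntegral.integral_congr hscale, intervalIntegral.integral_const_mul,
    intervalIntegral.integral_comp_mul_add (fun x : ℝ => x ^ b * (1 - x) ^ a) (by norm_num) (1 / 2)]
  norm_num [integral_rpow_mul_one_sub_rpow hb ha]
  rw [Real.rpow_add_one two_ne_zero, add_comm b a]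
  ring

theorem intervalIntegrable_one_sub_rpow_mul_one_add_rpow {a b : ℝ} (ha : -1 < a) (hb : -1 < b) :
    IntervalIntegrable (fun x : ℝ => (1 - x) ^ a * (1 + x) ^ b) MeasureTheory.volume (-1) 1 := by
  -- A non-integrable function would have integral `0`, but the Beta value is positive.
  refine intervalIntegral.intervalIntegrable_of_integral_ne_zero ?_
  rw [integral_one_sub_rpow_mul_one_add_rpow ha hb]
  have hΓ (c : ℝ) (hc : 0 < c) : Real.Gamma c ≠ 0 := (Real.Gamma_pos_of_pos hc).ne'
  have h2 := Real.rpow_pos_of_pos two_pos (a + b + 1)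
  exact mul_ne_zero h2.ne' (div_ne_zero
    (mul_ne_zero (hΓ _ (by linarith)) (hΓ _ (by linarith))) (hΓ _ (by linarith)))

end BetaIntegral

section Jacobi

variable {α β : ℝ}

/-- The coefficient of `((x - 1) / 2) ^ k * ((x + 1) / 2) ^ (n - k)` in the defining sum of
`P_n^{(α,β)}`. -/
noncomputable def jacobiCoeff (α β : ℝ) (n k : ℕ) : ℝ :=
  Real.Gamma (n + α + 1) / (Real.Gamma ((n : ℝ) - k + 1) * Real.Gamma (α + k + 1)) *
    (Real.Gamma (n + β + 1) / (Real.Gamma ((k : ℝ) + 1) * Real.Gamma ((n : ℝ) - k + β + 1)))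

/-- The coefficient of `((x - 1) / 2) ^ m` in the Taylor expansion of `P_n^{(α,β)}` at `1`. The
descending Pochhammer symbol is the usual quotient `Γ(n+m+α+β+1) / Γ(n+α+β+1)`, written so as to
make sense for `n = 0` and `α + β ≤ -1` as well. -/
noncomputable def jacobiTaylorCoeff (α β : ℝ) (n m : ℕ) : ℝ :=
  Real.Gamma (n + α + 1) / (n.factorial * Real.Gamma (α + m + 1)) * n.choose m *
    (descPochhammer ℝ m).eval (n + m + α + β)

theorem Gamma_natCast_add_pos (hα : -1 < α) (n : ℕ) : 0 < Real.Gamma (n + α + 1) :=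
  Real.Gamma_pos_of_pos (by linarith [n.cast_nonneg (α := ℝ)])

theorem Gamma_add_natCast_pos (hα : -1 < α) (n : ℕ) : 0 < Real.Gamma (α + n + 1) := by
  simpa only [add_comm α] using Gamma_natCast_add_pos hα n

theorem jacobiCoeff_eq (hβ : -1 < β) {n k : ℕ} (hk : k ≤ n) :
    jacobiCoeff α β n k = Real.Gamma (n + α + 1) / (n.factorial * Real.Gamma (α + k + 1)) *
      n.choose k * (descPochhammer ℝ k).eval (n + β) := by
  have hpos := Gamma_natCast_add_pos hβ (n - k)
  rw [Nat.cast_sub hk] at hpos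
  have hΓ := Gamma_add_one_eq_descPochhammer_mul k (x := n + β)
    (by linarith [show (k : ℝ) ≤ n from mod_cast hk])
  rw [show n + β - k + 1 = n - k + β + 1 by ring] at hΓ
  have hchoose := (Nat.choose_pos hk).ne'
  rw [jacobiCoeff, hΓ, Real.Gamma_nat_eq_factorial, ← Nat.cast_sub hk,
    Real.Gamma_nat_eq_factorial, Nat.cast_sub hk, ← Nat.choose_mul_factorial_mul_factorial hk]
  push_cast
  field_simp

theorem jacobiCoeff_mul_choose (hα : -1 < α) (hβ : -1 < β) {n m k : ℕ} (hm : m ≤ n) (hk : k ≤ m) :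
    jacobiCoeff α β n k * (n - k).choose (m - k) =
      Real.Gamma (n + α + 1) / (n.factorial * Real.Gamma (α + m + 1)) * n.choose m *
        (m.choose k * ((descPochhammer ℝ k).eval (n + β) *
          (descPochhammer ℝ (m - k)).eval (α + m))) := by
  have hpos := Gamma_add_natCast_pos hα k
  have hpos' := Gamma_add_natCast_pos hα m
  have hΓ := Gamma_add_one_eq_descPochhammer_mul (m - k) (x := α + m)
    (by push_cast [Nat.cast_sub hk]; linarith [k.cast_nonneg (α := ℝ)])
  rw [show α + m - (m - k : ℕ) + 1 = α + k + 1 by push_cast [Nat.cast_sub hk]; ring] at hΓ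
  have hchoose : (n.choose m * m.choose k : ℝ) = n.choose k * (n - k).choose (m - k) :=
    mod_cast Nat.choose_mul hk
  rw [jacobiCoeff_eq hβ (hk.trans hm)]
  field_simp
  linear_combination Real.Gamma (n + α + 1) * (descPochhammer ℝ k).eval (n + β) *
    (n.choose k * (n - k).choose (m - k) * hΓ -
      (descPochhammer ℝ (m - k)).eval (α + m) * Real.Gamma (α + k + 1) * hchoose)

theorem sum_jacobiCoeff_mul_choose (hα : -1 < α) (hβ : -1 < β) {n m : ℕ} (hm : m ≤ n) :
    ∑ k ∈ Finset.range (m + 1), jacobiCoeff α β n k * (n - k).choose (m - k) =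
      jacobiTaylorCoeff α β n m := by
  rw [jacobiTaylorCoeff, show (n + m + α + β : ℝ) = (n + β) + (α + m) by ring,
    descPochhammer_eval_add, Finset.mul_sum]
  exact Finset.sum_congr rfl fun k hk =>
    jacobiCoeff_mul_choose hα hβ hm (Finset.mem_range_succ_iff.mp hk)

theorem jacobiP_eq_sum (hα : -1 < α) (hβ : -1 < β) (n : ℕ) :
    jacobiP α β n = ∑ m ∈ Finset.range (n + 1),
      C (jacobiTaylorCoeff α β n m) * (C (2⁻¹ : ℝ) * (X - 1)) ^ m := by
  set u : ℝ[X] := C (2⁻¹ : ℝ) * (X - 1)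
  have hu : C (2⁻¹ : ℝ) * (X + 1) = u + 1 := by
    have h : (C (2⁻¹ : ℝ) + C (2⁻¹ : ℝ) : ℝ[X]) = 1 := by rw [← C_add]; norm_num
    linear_combination h
  calc
    jacobiP α β n = ∑ k ∈ Finset.range (n + 1), ∑ i ∈ Finset.range (n + 1 - k),
        C (jacobiCoeff α β n k * (n - k).choose i) * u ^ (k + i) := by
      refine Finset.sum_congr rfl fun k hk => ?_
      rw [← jacobiCoeff, hu, add_pow, Finset.mul_sum,
        Nat.sub_add_comm (Finset.mem_range_succ_iff.mp hk)]
      refine Finset.sum_congr rfl fun i _ => ?_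
      rw [C_mul, pow_add, one_pow, map_natCast]
      ring
    _ = ∑ m ∈ Finset.range (n + 1), ∑ k ∈ Finset.range (m + 1),
        C (jacobiCoeff α β n k * (n - k).choose (m - k)) * u ^ (k + (m - k)) :=
      (Finset.sum_range_diag_flip (n + 1)
        fun k i => C (jacobiCoeff α β n k * (n - k).choose i) * u ^ (k + i)).symm
    _ = _ := by
      refine Finset.sum_congr rfl fun m hm => ?_
      rw [← sum_jacobiCoeff_mul_choose hα hβ (Finset.mem_range_succ_iff.mp hm), map_sum,
        Finset.sum_mul]
      refine Finset.sum_congr rfl fun k hk => ?_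
      rw [Nat.add_sub_cancel' (Finset.mem_range_succ_iff.mp hk)]

theorem jacobiTaylorCoeff_of_lt {n m : ℕ} (h : n < m) : jacobiTaylorCoeff α β n m = 0 := by
  simp [jacobiTaylorCoeff, Nat.choose_eq_zero_of_lt h]

theorem jacobiTaylorCoeff_pos (hα : -1 < α) (hβ : -1 < β) {n m : ℕ} (h : m ≤ n) :
    0 < jacobiTaylorCoeff α β n m := by
  have hn := Gamma_natCast_add_pos hα n
  have hm := Gamma_add_natCast_pos hα m
  have hchoose := Nat.choose_pos h
  rcases m.eq_zero_or_pos with rfl | hm0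
  · simp only [jacobiTaylorCoeff, descPochhammer_zero, eval_one]
    positivity
  · have hn1 : (1 : ℝ) ≤ n := mod_cast hm0.trans_le h
    have hdesc : 0 < (descPochhammer ℝ m).eval (n + m + α + β) := descPochhammer_pos (by linarith)
    rw [jacobiTaylorCoeff]
    positivity

theorem coeff_taylor_one_jacobiP (hα : -1 < α) (hβ : -1 < β) (n m : ℕ) :
    (taylor 1 (jacobiP α β n)).coeff m = jacobiTaylorCoeff α β n m / 2 ^ m := by
  have h : taylor 1 (jacobiP α β n) = ∑ k ∈ Finset.range (n + 1),
      C (jacobiTaylorCoeff α β n k / 2 ^ k) * X ^ k := by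
    rw [jacobiP_eq_sum hα hβ, map_sum]
    refine Finset.sum_congr rfl fun k _ => ?_
    simp only [taylor_apply, mul_comp, C_comp, pow_comp, sub_comp, X_comp, one_comp, C_1,
      add_sub_cancel_right, mul_pow, div_eq_mul_inv, C_mul, ← C_pow, inv_pow]
    ring
  simp only [h, finsetSum_coeff, coeff_C_mul_X_pow, Finset.sum_ite_eq, Finset.mem_range]
  split_ifs with hm
  · rfl
  · rw [jacobiTaylorCoeff_of_lt (by omega), zero_div]

theorem natDegree_jacobiP (hα : -1 < α) (hβ : -1 < β) (n : ℕ) :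
    (jacobiP α β n).natDegree = n := by
  rw [← natDegree_taylor _ 1]
  refine natDegree_eq_of_le_of_coeff_ne_zero ?_ ?_
  · refine natDegree_le_iff_coeff_eq_zero.2 fun m hm => ?_
    rw [coeff_taylor_one_jacobiP hα hβ, jacobiTaylorCoeff_of_lt hm, zero_div]
  · rw [coeff_taylor_one_jacobiP hα hβ]
    exact (div_pos (jacobiTaylorCoeff_pos hα hβ le_rfl) (by positivity)).ne'

theorem leadingCoeff_jacobiP_pos (hα : -1 < α) (hβ : -1 < β) (n : ℕ) :
    0 < (jacobiP α β n).leadingCoeff := by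
  rw [← coeff_taylor_natDegree (r := 1), natDegree_jacobiP hα hβ, coeff_taylor_one_jacobiP hα hβ]
  exact div_pos (jacobiTaylorCoeff_pos hα hβ le_rfl) (by positivity)

theorem iterate_derivative_jacobiP_eval_one (hα : -1 < α) (hβ : -1 < β) (j n : ℕ) :
    (derivative^[j] (jacobiP α β n)).eval 1 = j.factorial / 2 ^ j * jacobiTaylorCoeff α β n j := by
  rw [← factorial_smul_hasseDeriv, LinearMap.smul_apply, eval_smul, ← taylor_coeff,
    coeff_taylor_one_jacobiP hα hβ, nsmul_eq_mul]
  ring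

theorem jacobiP_eval_one (hα : -1 < α) (hβ : -1 < β) (n : ℕ) :
    (jacobiP α β n).eval 1 = Real.Gamma (n + α + 1) / (n.factorial * Real.Gamma (α + 1)) := by
  simpa [jacobiTaylorCoeff] using iterate_derivative_jacobiP_eval_one hα hβ 0 n

theorem jacobiP_eval_one_pos (hα : -1 < α) (hβ : -1 < β) (n : ℕ) :
    0 < (jacobiP α β n).eval 1 := by
  have hn := Gamma_natCast_add_pos hα n
  have h0 : 0 < Real.Gamma (α + 1) := Real.Gamma_pos_of_pos (by linarith)
  rw [jacobiP_eval_one hα hβ]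
  positivity

theorem jacobiP_eval (α β : ℝ) (n : ℕ) (x : ℝ) :
    (jacobiP α β n).eval x = ∑ k ∈ Finset.range (n + 1),
      jacobiCoeff α β n k * (2⁻¹ * (x - 1)) ^ k * (2⁻¹ * (x + 1)) ^ (n - k) := by
  simp [jacobiP, jacobiCoeff, eval_finsetSum]

theorem jacobiCoeff_mul_integral (hα : -1 < α) (hβ : -1 < β) {n k : ℕ} (hk : k ≤ n) (m : ℕ) :
    jacobiCoeff α β n k *
        ∫ x in (-1 : ℝ)..1, (1 - x) ^ (α + m + k) * (1 + x) ^ (β + (n - k : ℕ)) =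
      2 ^ (α + β + m + 1 + n) * (Real.Gamma (n + α + 1) * Real.Gamma (n + β + 1) /
        (n.factorial * Real.Gamma (n + m + α + β + 2))) *
          (n.choose k * (descPochhammer ℝ m).eval (k + (α + m))) := by
  have hk0 : (0 : ℝ) ≤ k := k.cast_nonneg
  have hm0 : (0 : ℝ) ≤ m := m.cast_nonneg
  have hkn : (k : ℝ) ≤ n := mod_cast hk
  have hΓα := Gamma_add_one_eq_descPochhammer_mul m (x := k + (α + m)) (by linarith [hk0])
  rw [show k + (α + m) - m + 1 = α + k + 1 by ring] at hΓα
  have hΓβ := Gamma_add_one_eq_descPochhammer_mul k (x := n + β) (by linarith)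
  have hpos := Gamma_add_natCast_pos hα k
  rw [Nat.cast_sub hk, integral_one_sub_rpow_mul_one_add_rpow (by linarith [hk0, hm0])
      (by linarith), jacobiCoeff_eq hβ hk, hΓβ,
    show α + m + k + 1 = k + (α + m) + 1 by ring, hΓα,
    show α + m + k + (β + (n - k)) + 1 = α + β + m + 1 + n by ring,
    show α + m + k + (β + (n - k)) + 2 = n + m + α + β + 2 by ring,
    show β + ((n : ℝ) - k) + 1 = n + β - k + 1 by ring]
  field_simp

theorem integral_jacobiP_mul_one_sub_pow (hα : -1 < α) (hβ : -1 < β) (n m : ℕ) :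
    ∫ x in (-1 : ℝ)..1, (jacobiP α β n).eval x * (1 - x) ^ m * ((1 - x) ^ α * (1 + x) ^ β) =
      2 ^ (α + β + m + 1) * (Real.Gamma (n + α + 1) * Real.Gamma (n + β + 1) /
        (n.factorial * Real.Gamma (n + m + α + β + 2))) *
          ∑ k ∈ Finset.range (n + 1),
            (-1) ^ k * (n.choose k : ℝ) * (descPochhammer ℝ m).eval (k + (α + m)) := by
  have hsum : ∀ x ∈ Set.Ioo (-1 : ℝ) 1,
      (jacobiP α β n).eval x * (1 - x) ^ m * ((1 - x) ^ α * (1 + x) ^ β) =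
        ∑ k ∈ Finset.range (n + 1), ((-1) ^ k * 2⁻¹ ^ n * jacobiCoeff α β n k) *
          ((1 - x) ^ (α + m + k) * (1 + x) ^ (β + (n - k : ℕ))) := by
    rintro x ⟨hx₁, hx₂⟩
    have hsub : 1 - x ≠ 0 := by linarith
    have hadd : 1 + x ≠ 0 := by linarith
    rw [jacobiP_eval, Finset.sum_mul, Finset.sum_mul]
    refine Finset.sum_congr rfl fun k hk => ?_
    rw [Real.rpow_add_natCast hsub, Real.rpow_add_natCast hsub, Real.rpow_add_natCast hadd,
      ← pow_mul_pow_sub 2⁻¹ (Finset.mem_range_succ_iff.mp hk),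
      show 2⁻¹ * (x - 1) = -1 * 2⁻¹ * (1 - x) by ring, mul_pow, mul_pow, mul_pow, add_comm x]
    ring
  have hint : ∀ k ∈ Finset.range (n + 1), IntervalIntegrable (fun x : ℝ =>
      ((-1) ^ k * 2⁻¹ ^ n * jacobiCoeff α β n k) *
        ((1 - x) ^ (α + m + k) * (1 + x) ^ (β + (n - k : ℕ)))) MeasureTheory.volume (-1) 1 := by
    intro k _
    refine (intervalIntegrable_one_sub_rpow_mul_one_add_rpow ?_ ?_).const_mul _
    · linarith [k.cast_nonneg (α := ℝ), m.cast_nonneg (α := ℝ)]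
    · linarith [(n - k).cast_nonneg (α := ℝ)]
  rw [intervalIntegral.integral_congr_Ioo_of_le (by norm_num) hsum,
    intervalIntegral.integral_finsetSum hint, Finset.mul_sum]
  refine Finset.sum_congr rfl fun k hk => ?_
  rw [intervalIntegral.integral_const_mul, mul_assoc,
    jacobiCoeff_mul_integral hα hβ (Finset.mem_range_succ_iff.mp hk),
    Real.rpow_add_natCast two_ne_zero, inv_pow]
  field_simp

theorem integral_jacobiP_mul_one_sub_pow_of_lt (hα : -1 < α) (hβ : -1 < β) {n m : ℕ} (h : m < n) :
    ∫ x in (-1 : ℝ)..1, (jacobiP α β n).eval x * (1 - x) ^ m * ((1 - x) ^ α * (1 + x) ^ β) = 0 := by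
  rw [integral_jacobiP_mul_one_sub_pow hα hβ, sum_neg_one_pow_mul_choose_mul_descPochhammer h.le,
    if_neg h.ne, mul_zero]

theorem integral_jacobiP_mul_one_sub_pow_self (hα : -1 < α) (hβ : -1 < β) (n : ℕ) :
    ∫ x in (-1 : ℝ)..1, (jacobiP α β n).eval x * (1 - x) ^ n * ((1 - x) ^ α * (1 + x) ^ β) =
      (-1) ^ n * 2 ^ (α + β + n + 1) * (Real.Gamma (n + α + 1) * Real.Gamma (n + β + 1) /
        Real.Gamma (2 * n + α + β + 2)) := by
  rw [integral_jacobiP_mul_one_sub_pow hα hβ, sum_neg_one_pow_mul_choose_mul_descPochhammer le_rfl,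
    if_pos rfl, show (n + n + α + β + 2 : ℝ) = 2 * n + α + β + 2 by ring]
  field_simp

theorem jacobiNormSq_nonneg (α β : ℝ) (n : ℕ) : 0 ≤ jacobiNormSq α β n := by
  refine intervalIntegral.integral_nonneg (by norm_num) fun x hx => ?_
  have hsub : 0 ≤ 1 - x := by linarith [hx.2]
  have hadd : 0 ≤ 1 + x := by linarith [hx.1]
  positivity

theorem jacobiNormSq_eq_jacobiTaylorCoeff_mul (hα : -1 < α) (hβ : -1 < β) (n : ℕ) :
    jacobiNormSq α β n = jacobiTaylorCoeff α β n n * (2 ^ (α + β + 1) *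
      (Real.Gamma (n + α + 1) * Real.Gamma (n + β + 1) / Real.Gamma (2 * n + α + β + 2))) := by
  have heval (x : ℝ) : (jacobiP α β n).eval x =
      ∑ m ∈ Finset.range (n + 1), jacobiTaylorCoeff α β n m * (-2⁻¹) ^ m * (1 - x) ^ m := by
    simp only [jacobiP_eq_sum hα hβ, eval_finsetSum, eval_mul, eval_C, eval_pow, eval_sub, eval_X,
      eval_one, mul_assoc, ← mul_pow, neg_mul, ← mul_neg, neg_sub]
  have hexpand (x : ℝ) : (jacobiP α β n).eval x ^ 2 * (1 - x) ^ α * (1 + x) ^ β =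
      ∑ m ∈ Finset.range (n + 1), (jacobiTaylorCoeff α β n m * (-2⁻¹) ^ m) *
        ((jacobiP α β n).eval x * (1 - x) ^ m * ((1 - x) ^ α * (1 + x) ^ β)) := by
    rw [pow_two]
    nth_rewrite 2 [heval]
    simp only [Finset.mul_sum, Finset.sum_mul]
    exact Finset.sum_congr rfl fun m _ => by ring
  have hint (m : ℕ) : IntervalIntegrable (fun x : ℝ =>
      (jacobiP α β n).eval x * (1 - x) ^ m * ((1 - x) ^ α * (1 + x) ^ β))
      MeasureTheory.volume (-1) 1 :=
    (intervalIntegrable_one_sub_rpow_mul_one_add_rpow hα hβ).continuousOn_mul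
      ((jacobiP α β n).continuous.mul (by fun_prop)).continuousOn
  have hpow : (-2⁻¹ : ℝ) ^ n * (-1) ^ n * 2 ^ n = 1 := by
    rw [← mul_pow, ← mul_pow]
    norm_num
  simp only [jacobiNormSq, hexpand]
  rw [intervalIntegral.integral_finsetSum fun m _ => (hint m).const_mul _, Finset.sum_range_succ,
    Finset.sum_eq_zero, intervalIntegral.integral_const_mul,
    integral_jacobiP_mul_one_sub_pow_self hα hβ, show α + β + n + 1 = α + β + 1 + n by ring,
    Real.rpow_add_natCast two_ne_zero]
  · linear_combination (jacobiTaylorCoeff α β n n * (2 ^ (α + β + 1) *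
      (Real.Gamma (n + α + 1) * Real.Gamma (n + β + 1) / Real.Gamma (2 * n + α + β + 2)))) * hpow
  · intro m hm
    rw [intervalIntegral.integral_const_mul,
      integral_jacobiP_mul_one_sub_pow_of_lt hα hβ (Finset.mem_range.mp hm), mul_zero]

theorem jacobiNormSq_eq (hα : -1 < α) (hβ : -1 < β) {n : ℕ} (hn : 1 ≤ n) :
    jacobiNormSq α β n = 2 ^ (α + β + 1) * (Real.Gamma (n + α + 1) * Real.Gamma (n + β + 1)) /
      (n.factorial * Real.Gamma (n + (α + β) + 1) * (2 * n + α + β + 1)) := by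
  have hn' : (1 : ℝ) ≤ n := mod_cast hn
  have hΓ := Gamma_add_one_eq_descPochhammer_mul n (x := n + n + α + β) (by linarith)
  have hΓ' := Real.Gamma_add_one (s := 2 * n + α + β + 1) (by linarith)
  rw [show n + n + α + β - n + 1 = n + (α + β) + 1 by ring] at hΓ
  rw [show 2 * n + α + β + 1 = n + n + α + β + 1 by ring, hΓ,
    show n + n + α + β + 1 + 1 = 2 * n + α + β + 2 by ring] at hΓ'
  have hα' := Gamma_natCast_add_pos hα n
  have hαβ := Real.Gamma_pos_of_pos (s := n + (α + β) + 1) (by linarith)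
  have hdesc : 0 < (descPochhammer ℝ n).eval (n + n + α + β) := descPochhammer_pos (by linarith)
  rw [jacobiNormSq_eq_jacobiTaylorCoeff_mul hα hβ, jacobiTaylorCoeff, hΓ', Nat.choose_self,
    add_comm α (n : ℝ), show 2 * n + α + β + 1 = n + n + α + β + 1 by ring]
  generalize (descPochhammer ℝ n).eval (n + n + α + β) = D at hdesc ⊢
  field_simp
  simp

theorem factorial_mul_jacobiTaylorCoeff (α β : ℝ) (n j : ℕ) :
    j.factorial * jacobiTaylorCoeff α β n j =
      Real.Gamma (n + α + 1) / (n.factorial * Real.Gamma (α + j + 1)) *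
        (n.descFactorial j * (descPochhammer ℝ j).eval (n + j + α + β)) := by
  rw [jacobiTaylorCoeff, Nat.descFactorial_eq_factorial_mul_choose]
  push_cast
  ring

theorem isEquivalent_iterate_derivative_jacobiP_eval_one (hα : -1 < α) (hβ : -1 < β) (j : ℕ) :
    (fun n => (derivative^[j] (jacobiP α β n)).eval 1) ~[atTop]
      fun n => (n : ℝ) ^ (α + 2 * j) / (2 ^ j * Real.Gamma (α + j + 1)) := by
  have hfactorial : (fun n : ℕ => (n.factorial * Real.Gamma (α + j + 1) : ℝ)) ~[atTop]
      fun n => n.factorial * Real.Gamma (α + j + 1) := IsEquivalent.refl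
  have h := (IsEquivalent.refl (u := fun _ : ℕ => ((2 : ℝ) ^ j)⁻¹)).mul
    (((isEquivalent_Gamma_natCast_add α).div hfactorial).mul
      ((isEquivalent_descPochhammer_eval_natCast_add j 0).mul
        (isEquivalent_descPochhammer_eval_natCast_add j (j + α + β))))
  refine (h.congr_left (.of_forall fun n => ?_)).congr_right ?_
  · simp only [Pi.mul_apply, Pi.div_apply, add_zero]
    rw [iterate_derivative_jacobiP_eval_one hα hβ, div_mul_eq_mul_div (j.factorial : ℝ),
      factorial_mul_jacobiTaylorCoeff, descPochhammer_eval_eq_descFactorial, ← add_assoc,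
      ← add_assoc]
    ring
  · filter_upwards [eventually_ne_atTop 0] with n hn
    simp only [Pi.mul_apply, Pi.div_apply]
    rw [show α + 2 * (j : ℝ) = α + (2 * j : ℕ) by push_cast; rfl,
      Real.rpow_add_natCast (Nat.cast_ne_zero.2 hn), pow_mul']
    field_simp

theorem isEquivalent_jacobiNormSq (hα : -1 < α) (hβ : -1 < β) :
    jacobiNormSq α β ~[atTop] fun n => 2 ^ (α + β) / (n : ℝ) := by
  have hlin : (fun n : ℕ => (2 * n + α + β + 1 : ℝ)) ~[atTop] fun n => 2 * (n : ℝ) := by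
    refine ((IsEquivalent.refl (u := fun _ : ℕ => (2 : ℝ))).mul
      (isEquivalent_natCast_add_const ((α + β + 1) / 2))).congr_left (.of_forall fun n => ?_)
    simp only [Pi.mul_apply]
    ring
  have hfactorial : (fun n : ℕ => (n.factorial : ℝ)) ~[atTop] fun n => n.factorial :=
    IsEquivalent.refl
  have h := ((IsEquivalent.refl (u := fun _ : ℕ => (2 : ℝ) ^ (α + β + 1))).mul
    ((isEquivalent_Gamma_natCast_add α).mul (isEquivalent_Gamma_natCast_add β))).div
      ((hfactorial.mul (isEquivalent_Gamma_natCast_add (α + β))).mul hlin)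
  refine (h.congr_left ?_).congr_right ?_
  · filter_upwards [eventually_ge_atTop 1] with n hn
    exact (jacobiNormSq_eq hα hβ hn).symm
  · filter_upwards [eventually_gt_atTop 0] with n hn
    have hn' : (0 : ℝ) < n := mod_cast hn
    simp only [Pi.mul_apply, Pi.div_apply]
    rw [Real.rpow_add hn', Real.rpow_add_one two_ne_zero]
    field_simp

theorem rpow_isBigO_iterate_derivative_sq_div_jacobiNormSq (hα : -1 < α) (hβ : -1 < β) (j : ℕ) :
    (fun n : ℕ => (n : ℝ) ^ (2 * α + 4 * j + 1)) =O[atTop]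
      fun n => (derivative^[j] (jacobiP α β n)).eval 1 ^ 2 / jacobiNormSq α β n := by
  have hΓ := Gamma_add_natCast_pos hα j
  have h := ((isEquivalent_iterate_derivative_jacobiP_eval_one hα hβ j).pow 2).div
    (isEquivalent_jacobiNormSq hα hβ)
  refine IsBigO.trans ?_ h.isBigO_symm
  refine IsBigO.of_bound ((2 ^ j * Real.Gamma (α + j + 1)) ^ 2 * 2 ^ (α + β)) ?_
  filter_upwards [eventually_gt_atTop 0] with n hn
  have hn' : (0 : ℝ) < n := mod_cast hn
  have hpow : ((n : ℝ) ^ (α + 2 * j)) ^ 2 * n = n ^ (2 * α + 4 * j + 1) := by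
    rw [← Real.rpow_mul_natCast hn'.le, ← Real.rpow_add_one hn'.ne']
    push_cast
    ring_nf
  rw [← hpow]
  simp only [Pi.div_apply, Pi.pow_apply]
  rw [Real.norm_of_nonneg (by positivity), Real.norm_of_nonneg (by positivity)]
  field_simp
  exact le_rfl

/-- The ratio `P_n^{(j)}(1) / P_n(1)` for `P_n = P_n^{(α,β)}`, which carries all the dependence
on `j` in `kernelGap_eq_sum`. -/
noncomputable def jacobiDerivRatio (α β : ℝ) (j n : ℕ) : ℝ :=
  (derivative^[j] (jacobiP α β n)).eval 1 / (jacobiP α β n).eval 1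

theorem iterate_derivative_jacobiP_eval_one_eq_mul (hα : -1 < α) (hβ : -1 < β) (j n : ℕ) :
    (derivative^[j] (jacobiP α β n)).eval 1 =
      (jacobiP α β n).eval 1 * jacobiDerivRatio α β j n :=
  (mul_div_cancel₀ _ (jacobiP_eval_one_pos hα hβ n).ne').symm

theorem jacobiDerivRatio_eq (hα : -1 < α) (hβ : -1 < β) (j n : ℕ) :
    jacobiDerivRatio α β j n = Real.Gamma (α + 1) / (Real.Gamma (α + j + 1) * 2 ^ j) *
      (n.descFactorial j * (descPochhammer ℝ j).eval (n + j + α + β)) := by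
  have hn := Gamma_natCast_add_pos hα n
  have h0 : 0 < Real.Gamma (α + 1) := Real.Gamma_pos_of_pos (by linarith)
  rw [jacobiDerivRatio, iterate_derivative_jacobiP_eval_one hα hβ, div_mul_eq_mul_div,
    factorial_mul_jacobiTaylorCoeff, jacobiP_eval_one hα hβ]
  field_simp

theorem jacobiDerivRatio_of_lt (hα : -1 < α) (hβ : -1 < β) {j n : ℕ} (h : n < j) :
    jacobiDerivRatio α β j n = 0 := by
  simp [jacobiDerivRatio_eq hα hβ, Nat.descFactorial_of_lt h]

theorem jacobiDerivRatio_nonneg (hα : -1 < α) (hβ : -1 < β) (j n : ℕ) :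
    0 ≤ jacobiDerivRatio α β j n := by
  rcases lt_or_ge n j with h | h
  · exact (jacobiDerivRatio_of_lt hα hβ h).ge
  · have hcoeff := jacobiTaylorCoeff_pos hα hβ h
    have hone := jacobiP_eval_one_pos hα hβ n
    rw [jacobiDerivRatio, iterate_derivative_jacobiP_eval_one hα hβ]
    positivity

theorem mul_jacobiDerivRatio_le (hα : -1 < α) (hβ : -1 < β) {c i n j : ℕ} (hj : 1 ≤ j)
    (hc : 1 ≤ c) (h : c * i ≤ n) :
    c * jacobiDerivRatio α β j i ≤ jacobiDerivRatio α β j n := by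
  rcases lt_or_ge i j with hij | hij
  · rw [jacobiDerivRatio_of_lt hα hβ hij, mul_zero]
    exact jacobiDerivRatio_nonneg hα hβ j n
  have hin : (i : ℝ) ≤ n := mod_cast (Nat.le_mul_of_pos_left i hc).trans h
  have hi : (1 : ℝ) ≤ i := mod_cast hj.trans hij
  have hΓ := Gamma_add_natCast_pos hα j
  have h0 : 0 < Real.Gamma (α + 1) := Real.Gamma_pos_of_pos (by linarith)
  have hmem : (i + j + α + β : ℝ) ∈ Set.Ici ((j : ℝ) - 1) := by
    rw [Set.mem_Ici]
    linarith
  have hmono := monotoneOn_descPochhammer_eval j hmem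
    (Set.mem_Ici.2 (hmem.trans (by linarith)))
    (show (i + j + α + β : ℝ) ≤ n + j + α + β by linarith)
  have hdesc := descPochhammer_nonneg (S := ℝ) hmem
  have hfact : (c * i.descFactorial j : ℝ) ≤ n.descFactorial j :=
    mod_cast mul_descFactorial_le_descFactorial hj hc h
  rw [jacobiDerivRatio_eq hα hβ, jacobiDerivRatio_eq hα hβ, mul_left_comm, ← mul_assoc (c : ℝ)]
  gcongr

end Jacobi

section Kernel

variable {α β : ℝ}

theorem kernK_self_nonneg (α β : ℝ) (j n : ℕ) (x : ℝ) : 0 ≤ kernK α β j j n x x :=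
  Finset.sum_nonneg fun i _ => div_nonneg (mul_self_nonneg _) (jacobiNormSq_nonneg α β i)

/-- The amount `r_n K_{n-1}^{(j,0)}(1,1) - K_{n-1}^{(j,j)}(1,1)`, with
`r_n = P_n^{(j)}(1) / P_n(1)`; by `sobQ_eval_one`, `Q_n(1) < 0` exactly when its product with `M_n`
exceeds `1`. -/
noncomputable def kernelGap (α β : ℝ) (j n : ℕ) : ℝ :=
  jacobiDerivRatio α β j n * (kernKPoly α β j (n - 1)).eval 1 - kernK α β j j (n - 1) 1 1

theorem kernelGap_eq_sum (hα : -1 < α) (hβ : -1 < β) (j : ℕ) {n : ℕ} (hn : 1 ≤ n) :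
    kernelGap α β j n = ∑ i ∈ Finset.range n, (jacobiP α β i).eval 1 ^ 2 *
      jacobiDerivRatio α β j i * (jacobiDerivRatio α β j n - jacobiDerivRatio α β j i) /
        jacobiNormSq α β i := by
  rw [kernelGap, kernKPoly, kernK, Nat.sub_add_cancel hn, eval_finsetSum, Finset.mul_sum,
    ← Finset.sum_sub_distrib]
  refine Finset.sum_congr rfl fun i _ => ?_
  rw [eval_mul, eval_C, iterate_derivative_jacobiP_eval_one_eq_mul hα hβ]
  ring

theorem kernelGap_term_nonneg (hα : -1 < α) (hβ : -1 < β) {i j n : ℕ} (hj : 1 ≤ j) (h : i ≤ n) :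
    0 ≤ (jacobiP α β i).eval 1 ^ 2 * jacobiDerivRatio α β j i *
      (jacobiDerivRatio α β j n - jacobiDerivRatio α β j i) / jacobiNormSq α β i := by
  have hmono : jacobiDerivRatio α β j i ≤ jacobiDerivRatio α β j n := by
    simpa using mul_jacobiDerivRatio_le hα hβ hj le_rfl ((one_mul i).trans_le h)
  exact div_nonneg (mul_nonneg (mul_nonneg (sq_nonneg _) (jacobiDerivRatio_nonneg hα hβ j i))
    (sub_nonneg.2 hmono)) (jacobiNormSq_nonneg α β i)

theorem iterate_derivative_sq_div_le_kernelGap_term (hα : -1 < α) (hβ : -1 < β) {i j n : ℕ}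
    (hj : 1 ≤ j) (h : 2 * i ≤ n) :
    (derivative^[j] (jacobiP α β i)).eval 1 ^ 2 / jacobiNormSq α β i ≤
      (jacobiP α β i).eval 1 ^ 2 * jacobiDerivRatio α β j i *
        (jacobiDerivRatio α β j n - jacobiDerivRatio α β j i) / jacobiNormSq α β i := by
  have hdouble : jacobiDerivRatio α β j i ≤
      jacobiDerivRatio α β j n - jacobiDerivRatio α β j i := by
    have hle := mul_jacobiDerivRatio_le (j := j) hα hβ hj one_le_two h
    push_cast at hle
    linarith
  rw [iterate_derivative_jacobiP_eval_one_eq_mul hα hβ, mul_pow, pow_two (jacobiDerivRatio α β j i),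
    ← mul_assoc]
  exact div_le_div_of_nonneg_right (mul_le_mul_of_nonneg_left hdouble
    (mul_nonneg (sq_nonneg _) (jacobiDerivRatio_nonneg hα hβ j i))) (jacobiNormSq_nonneg α β i)

theorem exists_mul_rpow_le_kernelGap (hα : -1 < α) (hβ : -1 < β) {j : ℕ} (hj : 1 ≤ j) :
    ∃ C > 0, ∀ᶠ n : ℕ in atTop, C * (n : ℝ) ^ (2 * (α + 2 * j + 1)) ≤ kernelGap α β j n := by
  obtain ⟨c, hc, hbound⟩ :=
    (rpow_isBigO_iterate_derivative_sq_div_jacobiNormSq hα hβ j).exists_pos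
  have hj' : (1 : ℝ) ≤ j := mod_cast hj
  have hlow : ∀ᶠ i : ℕ in atTop, c⁻¹ * (i : ℝ) ^ (2 * α + 4 * j + 1) ≤
      (derivative^[j] (jacobiP α β i)).eval 1 ^ 2 / jacobiNormSq α β i := by
    filter_upwards [hbound.bound] with i hi
    rwa [Real.norm_of_nonneg (by positivity),
      Real.norm_of_nonneg (div_nonneg (sq_nonneg _) (jacobiNormSq_nonneg α β i)),
      ← inv_mul_le_iff₀ hc] at hi
  obtain ⟨C, hC, hsum⟩ := exists_mul_rpow_le_sum_range (inv_pos.2 hc) (by linarith)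
    (fun n i hi => kernelGap_term_nonneg hα hβ hj hi.le)
    (hlow.mono fun i hi n hn =>
      hi.trans (iterate_derivative_sq_div_le_kernelGap_term hα hβ hj hn))
  refine ⟨C, hC, ?_⟩
  filter_upwards [hsum, eventually_ge_atTop 1] with n hn hn1
  rwa [kernelGap_eq_sum hα hβ j hn1,
    show 2 * (α + 2 * (j : ℝ) + 1) = 2 * α + 4 * j + 1 + 1 by ring]

end Kernel

section Sobolev

variable {α β : ℝ}

theorem sobQ_eval_one (hα : -1 < α) (hβ : -1 < β) (j : ℕ) {Ms : ℕ → ℝ} {n : ℕ} (hM : 0 ≤ Ms n) :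
    (sobQ α β j Ms n).eval 1 = (jacobiP α β n).eval 1 * (1 - Ms n * kernelGap α β j n) /
      (1 + Ms n * kernK α β j j (n - 1) 1 1) := by
  have hK := kernK_self_nonneg α β j (n - 1) 1
  have hden : 1 + Ms n * kernK α β j j (n - 1) 1 1 ≠ 0 := by positivity
  rw [sobQ, eval_sub, eval_mul, eval_C, kernelGap,
    iterate_derivative_jacobiP_eval_one_eq_mul hα hβ]
  field_simp
  ring

theorem sobQ_eval_one_neg (hα : -1 < α) (hβ : -1 < β) (j : ℕ) {Ms : ℕ → ℝ} {n : ℕ}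
    (hM : 0 ≤ Ms n) (h : 1 < Ms n * kernelGap α β j n) : (sobQ α β j Ms n).eval 1 < 0 := by
  have hK := kernK_self_nonneg α β j (n - 1) 1
  rw [sobQ_eval_one hα hβ j hM]
  exact div_neg_of_neg_of_pos
    (mul_neg_of_pos_of_neg (jacobiP_eval_one_pos hα hβ n) (sub_neg.2 h)) (by positivity)

theorem leadingCoeff_sobQ_pos (hα : -1 < α) (hβ : -1 < β) (j : ℕ) (Ms : ℕ → ℝ) {n : ℕ}
    (hn : 1 ≤ n) : 0 < (sobQ α β j Ms n).leadingCoeff := by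
  have hP_ne : jacobiP α β n ≠ 0 := leadingCoeff_ne_zero.1 (leadingCoeff_jacobiP_pos hα hβ n).ne'
  have hdegP (i : ℕ) : (jacobiP α β i).degree ≤ i :=
    natDegree_le_iff_degree_le.1 (natDegree_jacobiP hα hβ i).le
  have hkern : kernKPoly α β j (n - 1) ∈ degreeLT ℝ n := by
    refine Submodule.sum_mem _ fun i hi => ?_
    rw [C_mul']
    refine Submodule.smul_mem _ _ (mem_degreeLT.2 ((hdegP i).trans_lt ?_))
    rw [Nat.sub_add_cancel hn, Finset.mem_range] at hi
    exact_mod_cast hi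
  rw [sobQ, C_mul', leadingCoeff_sub_of_degree_lt]
  · exact leadingCoeff_jacobiP_pos hα hβ n
  · rw [degree_eq_natDegree hP_ne, natDegree_jacobiP hα hβ]
    exact mem_degreeLT.1 (Submodule.smul_mem _ _ hkern)

theorem sobQ_largest_zero_gt_one_general (hα : -1 < α) (hβ : -1 < β) {j : ℕ} (hj : 1 ≤ j)
    {Ms : ℕ → ℝ}
    (hlim : Tendsto (fun n : ℕ => Ms n * (n : ℝ) ^ (2 * (α + 2 * j + 1))) atTop atTop) :
    ∀ᶠ n in atTop, ∃ y, IsGreatest {x : ℝ | (sobQ α β j Ms n).eval x = 0} y ∧ 1 < y := by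
  obtain ⟨C, hC, hgap⟩ := exists_mul_rpow_le_kernelGap hα hβ hj
  filter_upwards [hgap, hlim.eventually_gt_atTop C⁻¹, eventually_ge_atTop 1] with n hn hlarge hn1
  have hM : 0 ≤ Ms n :=
    (pos_of_mul_pos_left ((inv_pos.2 hC).trans hlarge) (by positivity)).le
  have hgt : 1 < Ms n * kernelGap α β j n := calc
    1 < C * (Ms n * (n : ℝ) ^ (2 * (α + 2 * j + 1))) := (inv_lt_iff_one_lt_mul₀' hC).1 hlarge
    _ = Ms n * (C * (n : ℝ) ^ (2 * (α + 2 * j + 1))) := mul_left_comm _ _ _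
    _ ≤ Ms n * kernelGap α β j n := by gcongr
  exact exists_isGreatest_root_gt (sobQ_eval_one_neg hα hβ j hM hgt)
    (leadingCoeff_sobQ_pos hα hβ j Ms hn1)

end Sobolev

/-- for `γ < 2(α+2j+1)` and `n` large, the largest real zero of `Q_n`
is greater than 1. -/
theorem sobQ_largest_zero_gt_one (α β : ℝ) (hα : -1 < α) (hβ : -1 < β) (j : ℕ) (hj : 1 ≤ j)
    (γ M : ℝ) (hM : 0 < M) (Ms : ℕ → ℝ) (hMs : ∀ n, 0 ≤ Ms n)
    (hlim : Filter.Tendsto (fun n : ℕ => Ms n * (n : ℝ) ^ γ) Filter.atTop (nhds M))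
    (hγ : γ < 2 * (α + 2 * j + 1)) (y : ℕ → ℝ)
    (hy : ∀ n, 1 ≤ n → IsGreatest {x : ℝ | (sobQ α β j Ms n).eval x = 0} (y n)) :
    ∃ N : ℕ, ∀ n, N ≤ n → 1 < y n := by
  obtain ⟨N, hN⟩ := eventually_atTop.1 ((sobQ_largest_zero_gt_one_general hα hβ hj
    (tendsto_mul_natCast_rpow_atTop hM hlim hγ)).and (eventually_ge_atTop 1))
  exact ⟨N, fun n hn => let ⟨⟨_, hz, hz1⟩, hn1⟩ := hN n hn; (hy n hn1).unique hz ▸ hz1⟩
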